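/- Let w ∈ ℝ^d, x ∈ ℝ^d, and c > 0. For each coordinate j ∈ {1, …, d} let S_j ⊆ ℝ be a nonempty finite set, let l_j = min S_j and u_j = max S_j, and let δ_j ≥ 0 bound the maximum gap between consecutive points of S_j (for every t ∈ [l_j, u_j] there exist s, s' ∈ S_j with s' ≤ t ≤ s, s − t ≤ δ_j, and t − s' ≤ δ_j). Suppose the continuous recourse problem is feasible, i.e., the set B = {b ∈ ∏_j [l_j, u_j] : ⟨w, x + b⟩ ≥ 0} is nonempty, and let b* be a point of B of minimum ℓ₂-norm (which exists since B is compact). Then the discretized feasible set G = {a ∈ ∏_j S_j : ⟨w, x + a⟩ ≥ 0} is nonempty, and any minimum-ℓ₂-norm element a* of G satisfies c·‖a*‖₂ − c·‖b*‖₂ ≤ c·√(∑_{j=1}^d δ_j²). That is, the discretization error in the cost of recourse is bounded by the maximum discretization gap and can be controlled by refining the grid. -/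

import Mathlib

/-!
Move each coordinate of a feasible continuous action `b` to a nearby grid point, upwards where
`w j ≥ 0` and downwards where `w j ≤ 0`. This cannot decrease the score `⟨w, x + b⟩`, so the rounded
action is feasible, and it is coordinatewise within `δ` of `b`. The triangle inequality for the
`ℓ₂`-norm then bounds its cost, hence that of an optimal grid action.
-/

/-- `S` has points on both sides of `t`, each at distance at most `δ` from `t`. This is the gap
condition on a grid at a single point `t`. -/
def BracketsWithin {R : Type*} [LE R] [Sub R] (S : Set R) (δ t : R) : Prop :=
  ∃ s ∈ S, ∃ s' ∈ S, s' ≤ t ∧ t ≤ s ∧ s - t ≤ δ ∧ t - s' ≤ δ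

section Rounding

variable {R : Type*} [Ring R] [LinearOrder R] [IsOrderedRing R]

lemma BracketsWithin.exists_mul_le_mul_and_abs_sub_le {S : Set R} {δ t : R}
    (h : BracketsWithin S δ t) (w : R) : ∃ a ∈ S, w * t ≤ w * a ∧ |a - t| ≤ δ := by
  obtain ⟨s, hs, s', hs', hs't, hts, hsδ, hs'δ⟩ := h
  rcases le_total 0 w with hw | hw
  · exact ⟨s, hs, mul_le_mul_of_nonneg_left hts hw, by rwa [abs_of_nonneg (sub_nonneg.2 hts)]⟩
  · exact ⟨s', hs', mul_le_mul_of_nonpos_left hs't hw,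
      by rwa [abs_sub_comm, abs_of_nonneg (sub_nonneg.2 hs't)]⟩

lemma exists_mem_grid_score_le_and_abs_sub_le {ι : Type*} [Fintype ι] (w x : ι → R)
    {S : ι → Set R} {δ b : ι → R} (hgap : ∀ j, BracketsWithin (S j) (δ j) (b j)) :
    ∃ a : ι → R, (∀ j, a j ∈ S j) ∧
      ∑ j, w j * (x j + b j) ≤ ∑ j, w j * (x j + a j) ∧ ∀ j, |a j - b j| ≤ δ j := by
  choose a haS hwa haδ using fun j ↦ (hgap j).exists_mul_le_mul_and_abs_sub_le (w j)
  refine ⟨a, haS, Finset.sum_le_sum fun j _ ↦ ?_, haδ⟩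
  simpa only [mul_add] using add_le_add_right (hwa j) (w j * x j)

end Rounding

section EuclideanNorm

variable {ι : Type*} [Fintype ι]

lemma sqrt_sum_sq_add_le (u v : ι → ℝ) :
    √(∑ j, (u j + v j) ^ 2) ≤ √(∑ j, u j ^ 2) + √(∑ j, v j ^ 2) := by
  simpa [EuclideanSpace.norm_eq] using norm_add_le (WithLp.toLp 2 u) (WithLp.toLp 2 v)

lemma sqrt_sum_sq_le_add_of_abs_sub_le {a b δ : ι → ℝ} (h : ∀ j, |a j - b j| ≤ δ j) :
    √(∑ j, a j ^ 2) ≤ √(∑ j, b j ^ 2) + √(∑ j, δ j ^ 2) :=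
  calc √(∑ j, a j ^ 2)
    _ = √(∑ j, (b j + (a j - b j)) ^ 2) := by simp only [add_sub_cancel]
    _ ≤ √(∑ j, b j ^ 2) + √(∑ j, (a j - b j) ^ 2) := sqrt_sum_sq_add_le b fun j ↦ a j - b j
    _ ≤ √(∑ j, b j ^ 2) + √(∑ j, δ j ^ 2) := by
      gcongr √(∑ j, b j ^ 2) + √(∑ j, ?_) with j
      exact sq_le_sq.2 ((h j).trans (le_abs_self _))

end EuclideanNorm

theorem discretization_cost_error_bound_general {ι : Type*} [Fintype ι] (w x : ι → ℝ) {c : ℝ}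
    (hc : 0 ≤ c) {S : ι → Set ℝ} {δ b : ι → ℝ}
    (hgap : ∀ j, BracketsWithin (S j) (δ j) (b j)) (hb : 0 ≤ ∑ j, w j * (x j + b j)) :
    (∃ a : ι → ℝ, (∀ j, a j ∈ S j) ∧ 0 ≤ ∑ j, w j * (x j + a j)) ∧
    (∀ astar : ι → ℝ,
      (∀ j, astar j ∈ S j) → 0 ≤ (∑ j, w j * (x j + astar j)) →
      (∀ a : ι → ℝ, (∀ j, a j ∈ S j) → 0 ≤ (∑ j, w j * (x j + a j)) →
        √(∑ j, astar j ^ 2) ≤ √(∑ j, a j ^ 2)) →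
      c * √(∑ j, astar j ^ 2) - c * √(∑ j, b j ^ 2) ≤ c * √(∑ j, δ j ^ 2)) := by
  obtain ⟨a, haS, hscore, haδ⟩ := exists_mem_grid_score_le_and_abs_sub_le w x hgap
  have ha : 0 ≤ ∑ j, w j * (x j + a j) := hb.trans hscore
  refine ⟨⟨a, haS, ha⟩, fun astar _ _ hmin ↦ ?_⟩
  have hnorm : √(∑ j, astar j ^ 2) ≤ √(∑ j, b j ^ 2) + √(∑ j, δ j ^ 2) :=
    (hmin a haS ha).trans (sqrt_sum_sq_le_add_of_abs_sub_le haδ)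
  rw [← mul_sub]
  exact mul_le_mul_of_nonneg_left (sub_le_iff_le_add'.2 hnorm) hc

/-- **discretization error in the cost of recourse.** Let `w, x ∈ ℝ^d`
and `c > 0`. For each coordinate `j` let `S j` be a nonempty finite grid with
endpoints `l j = min S j`, `u j = max S j`, and let `δ j ≥ 0` bound the maximum gap
between consecutive grid points. Suppose the continuous recourse problem over the
box `∏ⱼ [l j, u j]` is feasible and `b*` is a minimum-ℓ₂-norm feasible continuous
action. Then the discretized feasible set over the grid `∏ⱼ S j` is nonempty, and
any minimum-ℓ₂-norm grid action `a*` satisfies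
`c·‖a*‖₂ - c·‖b*‖₂ ≤ c·√(∑ⱼ δ j²)`: the discretization error in the cost of
recourse is bounded by the maximum discretization gap. -/
theorem discretization_cost_error_bound {d : ℕ} (w x : Fin d → ℝ) (c : ℝ) (hc : 0 < c)
    (S : Fin d → Finset ℝ) (hS : ∀ j, (S j).Nonempty)
    (δ : Fin d → ℝ) (hδ : ∀ j, 0 ≤ δ j)
    (hgap : ∀ j, ∀ t ∈ Set.Icc ((S j).min' (hS j)) ((S j).max' (hS j)),
      ∃ s ∈ S j, ∃ s' ∈ S j, s' ≤ t ∧ t ≤ s ∧ s - t ≤ δ j ∧ t - s' ≤ δ j)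
    (bstar : Fin d → ℝ)
    (hbfeas : (∀ j, bstar j ∈ Set.Icc ((S j).min' (hS j)) ((S j).max' (hS j))) ∧
      0 ≤ ∑ j, w j * (x j + bstar j))
    (hbmin : ∀ b : Fin d → ℝ,
      (∀ j, b j ∈ Set.Icc ((S j).min' (hS j)) ((S j).max' (hS j))) →
      0 ≤ (∑ j, w j * (x j + b j)) →
      Real.sqrt (∑ j, bstar j ^ 2) ≤ Real.sqrt (∑ j, b j ^ 2)) :
    (∃ a : Fin d → ℝ, (∀ j, a j ∈ S j) ∧ 0 ≤ ∑ j, w j * (x j + a j)) ∧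
    (∀ astar : Fin d → ℝ,
      (∀ j, astar j ∈ S j) → 0 ≤ (∑ j, w j * (x j + astar j)) →
      (∀ a : Fin d → ℝ, (∀ j, a j ∈ S j) → 0 ≤ (∑ j, w j * (x j + a j)) →
        Real.sqrt (∑ j, astar j ^ 2) ≤ Real.sqrt (∑ j, a j ^ 2)) →
      c * Real.sqrt (∑ j, astar j ^ 2) - c * Real.sqrt (∑ j, bstar j ^ 2) ≤
        c * Real.sqrt (∑ j, δ j ^ 2)) :=
  discretization_cost_error_bound_general w x hc.le (S := fun j ↦ S j)
    (fun j ↦ hgap j (bstar j) (hbfeas.1 j)) hbfeas.2
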